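/- Let 1 ≤ a ≤ 2^s − 1, let h(x) = Σ_{j=0}^{2^s−a−1} h_j (x+1)^j ∈ 𝓚 with h_j ∈ F, let h₃(x) ∈ 𝓚 be either 0 or a unit, let 0 ≤ t₃ < 2^s − a, and let C = ⟨(x+1)^a + u² h(x), u(x+1)^{2^{s-1}} + u²(x+1)^{t₃} h₃(x), u²(x+1)^{2^s−a}⟩ be an ideal of 𝓡 with Tor_0(C) = ⟨(x+1)^a⟩, Tor_1(C) = ⟨(x+1)^{2^{s-1}}⟩ and Tor_2(C) = ⟨(x+1)^{2^s−a}⟩. Then C is self-dual if and only if: 2^{s-1} ≤ a ≤ 2^s − 1, h₃ = 0, and for every 0 ≤ ℓ ≤ 2^s − a − 1 one has h_ℓ = Σ_{j=0}^{ℓ} h_j · C(a−j, ℓ−j) in F, where C(n, i) is the binomial coefficient reduced into F (i.e., mod 2). -/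

import Mathlib

noncomputable section

open Polynomial

/-- The finite field `GF(2^m)`. -/
abbrev Fq (m : ℕ) : Type := GaloisField 2 m

/-- The ring `R₃ = F[u]/⟨u³⟩`. -/
abbrev R3 (m : ℕ) : Type := AdjoinRoot (X ^ 3 : (Fq m)[X])

/-- The polynomial `x^{2^s} + 1` over `R₃`. -/
abbrev gR (m s : ℕ) : (R3 m)[X] := X ^ (2 ^ s) + 1

/-- The polynomial `x^{2^s} + 1` over `F`. -/
abbrev gK (m s : ℕ) : (Fq m)[X] := X ^ (2 ^ s) + 1

/-- The ring `𝓡 = R₃[x]/⟨x^{2^s}+1⟩`. -/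
abbrev RR (m s : ℕ) : Type := AdjoinRoot (gR m s)

/-- The ring `𝓚 = F[x]/⟨x^{2^s}+1⟩`. -/
abbrev KK (m s : ℕ) : Type := AdjoinRoot (gK m s)

/-- The element `u` of `R₃`. -/
def uu (m : ℕ) : R3 m := AdjoinRoot.root _

/-- The element `u` of `𝓡`. -/
def uR (m s : ℕ) : RR m s := algebraMap (R3 m) (RR m s) (uu m)

/-- The element `x` of `𝓡`. -/
def xR (m s : ℕ) : RR m s := AdjoinRoot.root _

/-- The element `x` of `𝓚`. -/
def xK (m s : ℕ) : KK m s := AdjoinRoot.root _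

lemma gR_monic (m s : ℕ) : (gR m s).Monic := by
  have h : (gR m s) = X ^ (2 ^ s) + C 1 := by simp [gR]
  rw [h]; exact monic_X_pow_add_C _ (by positivity)

lemma gK_monic (m s : ℕ) : (gK m s).Monic := by
  have h : (gK m s) = X ^ (2 ^ s) + C 1 := by simp [gK]
  rw [h]; exact monic_X_pow_add_C _ (by positivity)

/-- The standard representative (of degree `< 2^s`) of an element of `𝓡`. -/
def repR (m s : ℕ) (c : RR m s) : (R3 m)[X] := AdjoinRoot.modByMonicHom (gR_monic m s) c

/-- The standard representative (of degree `< 2^s`) of an element of `𝓚`. -/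
def repK (m s : ℕ) (c : KK m s) : (Fq m)[X] := AdjoinRoot.modByMonicHom (gK_monic m s) c

/-- The `j`-th coefficient of the standard representative of `c ∈ 𝓡`. -/
def coeffR (m s : ℕ) (c : RR m s) (j : ℕ) : R3 m := (repR m s c).coeff j

/-- The dot product on `𝓡`. -/
def dotR (m s : ℕ) (c d : RR m s) : R3 m :=
  ∑ j ∈ Finset.range (2 ^ s), coeffR m s c j * coeffR m s d j

/-- The dual of a set of codewords. -/
def dualSet (m s : ℕ) (S : Set (RR m s)) : Set (RR m s) :=
  {c | ∀ d ∈ S, dotR m s c d = 0}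

/-- A cyclic code (ideal of `𝓡`) is self-dual if it coincides with its dual. -/
def IsSelfDual (m s : ℕ) (C : Ideal (RR m s)) : Prop :=
  (C : Set (RR m s)) = dualSet m s (C : Set (RR m s))

/-- The annihilator of a set of codewords. -/
def annSet (m s : ℕ) (S : Set (RR m s)) : Set (RR m s) :=
  {c | ∀ d ∈ S, c * d = 0}

/-- The reciprocal `c*(x) = x^{deg c} c(x⁻¹)` of an element of `𝓡`. -/
def recip (m s : ℕ) (c : RR m s) : RR m s :=
  xR m s ^ (repR m s c).natDegree *
    Polynomial.aeval (Ring.inverse (xR m s)) (repR m s c)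

/-- Reduction `R₃ → F` modulo `u`. -/
def epsR3 (m : ℕ) : R3 m →+* Fq m :=
  AdjoinRoot.lift (RingHom.id (Fq m)) 0 (by simp)

lemma xK_pow_add_one (m s : ℕ) : (xK m s) ^ (2 ^ s) + 1 = 0 := by
  have h := AdjoinRoot.eval₂_root (gK m s)
  simpa [gK, xK] using h

lemma xR_pow_add_one (m s : ℕ) : (xR m s) ^ (2 ^ s) + 1 = 0 := by
  have h := AdjoinRoot.eval₂_root (gR m s)
  simpa [gR, xR] using h

/-- Reduction `μ : 𝓡 → 𝓚` modulo `u`. -/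
def muRK (m s : ℕ) : RR m s →+* KK m s :=
  AdjoinRoot.lift ((algebraMap (Fq m) (KK m s)).comp (epsR3 m)) (xK m s) (by
    simp only [gR, eval₂_add, eval₂_pow, eval₂_X, eval₂_one]
    exact xK_pow_add_one m s)

/-- The natural inclusion `𝓚 → 𝓡`. -/
def KtoR (m s : ℕ) : KK m s →+* RR m s :=
  AdjoinRoot.lift ((algebraMap (R3 m) (RR m s)).comp (algebraMap (Fq m) (R3 m))) (xR m s) (by
    simp only [gK, eval₂_add, eval₂_pow, eval₂_X, eval₂_one]
    exact xR_pow_add_one m s)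

/-- The `i`-th torsion code of a set `S ⊆ 𝓡`. -/
def TorSet (m s : ℕ) (S : Set (RR m s)) (i : ℕ) : Set (KK m s) :=
  muRK m s '' {f | (uR m s) ^ i * f ∈ S}

/-- The torsion degree `T_i`: the (unique) `k` with `Tor_i = ⟨(x+1)^k⟩`. -/
def Tdeg (m s : ℕ) (S : Set (RR m s)) (i : ℕ) : ℕ :=
  sInf {k | TorSet m s S i =
    ((Ideal.span {(xK m s + 1) ^ k} : Ideal (KK m s)) : Set (KK m s))}

/-- Substitution `h(x) ↦ h(x⁻¹)` on `𝓚`. -/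
def invSub (m s : ℕ) (h : KK m s) : KK m s :=
  Polynomial.aeval (Ring.inverse (xK m s)) (repK m s h)



lemma two_Fq (m : ℕ) : (2 : Fq m) = 0 := by
  have := CharP.cast_eq_zero (Fq m) 2
  exact_mod_cast this

lemma two_RR (m s : ℕ) : (2 : RR m s) = 0 := by
  have := congrArg ((algebraMap (R3 m) (RR m s)).comp (algebraMap (Fq m) (R3 m))) (two_Fq m)
  rwa [map_ofNat, map_zero] at this

lemma two_KK (m s : ℕ) : (2 : KK m s) = 0 := by
  have := congrArg (algebraMap (Fq m) (KK m s)) (two_Fq m)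
  rwa [map_ofNat, map_zero] at this

lemma xR_pow (m s : ℕ) : xR m s ^ (2 ^ s) = 1 := by
  linear_combination xR_pow_add_one m s - two_RR m s

lemma uR_cube (m s : ℕ) : uR m s ^ 3 = 0 := by
  have h := AdjoinRoot.eval₂_root (X ^ 3 : (Fq m)[X])
  have hq : uu m ^ 3 = 0 := by simpa [uu] using h
  rw [uR, ← map_pow, hq, map_zero]

/-- inverse of x -/
def xi (m s : ℕ) : RR m s := xR m s ^ (2 ^ s - 1)

lemma xR_mul_xi (m s : ℕ) : xR m s * xi m s = 1 := by
  rw [xi, ← pow_succ', Nat.sub_add_cancel Nat.one_le_two_pow, xR_pow]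

/-- conjugation -/
def sg (m s : ℕ) : RR m s →+* RR m s :=
  AdjoinRoot.lift (algebraMap (R3 m) (RR m s)) (xi m s) (by
    simp only [gR, eval₂_add, eval₂_pow, eval₂_X, eval₂_one]
    rw [xi, ← pow_mul, mul_comm, pow_mul, xR_pow, one_pow]
    linear_combination two_RR m s)

lemma sg_x (m s : ℕ) : sg m s (xR m s) = xi m s := by
  simp only [sg, xR]; exact AdjoinRoot.lift_root _

lemma sg_alg (m s : ℕ) (r : R3 m) : sg m s (algebraMap _ _ r) = algebraMap _ _ r := by
  simp only [sg]; exact AdjoinRoot.lift_of _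

lemma sg_u (m s : ℕ) : sg m s (uR m s) = uR m s := sg_alg m s _

lemma sg_y (m s : ℕ) : sg m s (xR m s + 1) = xi m s * (xR m s + 1) := by
  rw [map_add, sg_x, map_one]; linear_combination -xR_mul_xi m s

instance (m : ℕ) : Nontrivial (R3 m) := by
  apply AdjoinRoot.nontrivial
  simp

lemma gR_natDegree (m s : ℕ) : (gR m s).natDegree = 2 ^ s := by
  have h : (gR m s) = X ^ (2 ^ s) + C 1 := by simp [gR]
  rw [h]; exact natDegree_X_pow_add_C

lemma coeffR_add (m s : ℕ) (c d : RR m s) (j : ℕ) :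
    coeffR m s (c + d) j = coeffR m s c j + coeffR m s d j := by
  simp [coeffR, repR]

lemma coeffR_sum (m s : ℕ) (S : Finset ℕ) (f : ℕ → RR m s) (j : ℕ) :
    coeffR m s (∑ i ∈ S, f i) j = ∑ i ∈ S, coeffR m s (f i) j := by
  simp [coeffR, repR]

lemma coeffR_smul (m s : ℕ) (r : R3 m) (d : RR m s) (j : ℕ) :
    coeffR m s (algebraMap _ _ r * d) j = r * coeffR m s d j := by
  rw [← Algebra.smul_def]
  simp [coeffR, repR]

lemma coeffR_xpow (m s : ℕ) (i j : ℕ) (hi : i < 2 ^ s) :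
    coeffR m s (xR m s ^ i) j = if j = i then 1 else 0 := by
  have h1 : xR m s ^ i = AdjoinRoot.mk (gR m s) (X ^ i) := by
    simp [xR]
  rw [coeffR, repR, h1, AdjoinRoot.modByMonicHom_mk, (modByMonic_eq_self_iff (gR_monic m s)).2]
  · rw [coeff_X_pow]
  · rw [degree_X_pow, degree_eq_natDegree (gR_monic m s).ne_zero, gR_natDegree]
    exact_mod_cast hi

lemma coeffR_expand (m s : ℕ) (c : RR m s) :
    c = ∑ i ∈ Finset.range (2 ^ s), algebraMap _ _ (coeffR m s c i) * xR m s ^ i := by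
  have h1 : AdjoinRoot.mk (gR m s) (repR m s c) = c :=
    AdjoinRoot.mk_leftInverse (gR_monic m s) c
  have h2 : (repR m s c).natDegree < 2 ^ s := by
    obtain ⟨p, rfl⟩ := AdjoinRoot.mk_surjective c
    rw [repR, AdjoinRoot.modByMonicHom_mk, ← gR_natDegree m s]
    apply natDegree_modByMonic_lt _ (gR_monic m s)
    intro h
    have := gR_natDegree m s
    rw [h] at this
    simp at this
    have := Nat.one_le_two_pow (n := s)
    omega
  conv_lhs => rw [← h1, as_sum_range' _ _ h2]
  rw [map_sum]
  apply Finset.sum_congr rfl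
  intro i _
  rw [← C_mul_X_pow_eq_monomial, map_mul, map_pow]
  rfl

lemma dotR_eq (m s : ℕ) (c d : RR m s) : dotR m s c d = coeffR m s (c * sg m s d) 0 := by
  conv_rhs => rw [coeffR_expand m s c, coeffR_expand m s d]
  rw [map_sum, Finset.sum_mul, coeffR_sum, dotR]
  apply Finset.sum_congr rfl
  intro i hi
  rw [Finset.mul_sum, coeffR_sum, Finset.sum_eq_single i]
  · have : algebraMap _ _ (coeffR m s c i) * xR m s ^ i *
      sg m s (algebraMap _ _ (coeffR m s d i) * xR m s ^ i) =
      algebraMap _ _ (coeffR m s c i) * (algebraMap _ _ (coeffR m s d i) * xR m s ^ 0) := by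
      rw [map_mul, sg_alg, map_pow, sg_x]
      have : xR m s ^ i * xi m s ^ i = 1 := by rw [← mul_pow, xR_mul_xi, one_pow]
      linear_combination (algebraMap _ _ (coeffR m s c i) * algebraMap _ _ (coeffR m s d i)) * this
    rw [this, coeffR_smul, coeffR_smul, coeffR_xpow _ _ _ _ (by positivity)]
    simp
  · intro j hj hji
    simp only [Finset.mem_range] at hi hj
    have : algebraMap _ _ (coeffR m s c i) * xR m s ^ i *
      sg m s (algebraMap _ _ (coeffR m s d j) * xR m s ^ j) =
      algebraMap _ _ (coeffR m s c i) * (algebraMap _ _ (coeffR m s d j) *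
        xR m s ^ (if j < i then i - j else i + 2 ^ s - j)) := by
      rw [map_mul, sg_alg, map_pow, sg_x]
      have : xR m s ^ i * xi m s ^ j = xR m s ^ (if j < i then i - j else i + 2 ^ s - j) := by
        have e : xR m s ^ i = xR m s ^ (if j < i then i - j else i + 2 ^ s - j) * xR m s ^ j := by
          rw [← pow_add]
          split_ifs
          · congr 1; omega
          · rw [Nat.sub_add_cancel (by omega), pow_add, xR_pow, mul_one]
        rw [e, mul_assoc, ← mul_pow, xR_mul_xi, one_pow, mul_one]
      linear_combination (algebraMap _ _ (coeffR m s c i) * algebraMap _ _ (coeffR m s d j)) * this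
    rw [this, coeffR_smul, coeffR_smul, coeffR_xpow, if_neg, mul_zero, mul_zero]
    · split_ifs <;> omega
    · split_ifs <;> omega
  · intro h; exact absurd hi h

lemma dotR_xpow (m s : ℕ) (e : RR m s) (k : ℕ) (hk : k < 2 ^ s) :
    dotR m s e (xR m s ^ k) = coeffR m s e k := by
  rw [dotR, Finset.sum_eq_single k]
  · rw [coeffR_xpow _ _ _ _ hk]; simp
  · intro b _ hb
    rw [coeffR_xpow _ _ _ _ hk, if_neg hb, mul_zero]
  · intro h; simp [hk] at h

lemma mem_dual (m s : ℕ) (C : Ideal (RR m s)) (c : RR m s) :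
    c ∈ dualSet m s (C : Set (RR m s)) ↔ ∀ d ∈ C, c * sg m s d = 0 := by
  constructor
  · intro h d hd
    rw [coeffR_expand m s (c * sg m s d)]
    apply Finset.sum_eq_zero
    intro k hk
    have h1 := h (xR m s ^ k * d) (C.mul_mem_left _ hd)
    rw [dotR_eq, map_mul, mul_comm (sg m s _), ← mul_assoc, ← dotR_eq,
      dotR_xpow _ _ _ _ (Finset.mem_range.1 hk)] at h1
    rw [h1, map_zero, zero_mul]
  · intro h d hd
    rw [dotR_eq, h d hd]
    simp [coeffR, repR]

lemma span_orth (m s : ℕ) (S : Set (RR m s)) (h : ∀ p ∈ S, ∀ q ∈ S, p * sg m s q = 0) :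
    ∀ c ∈ Ideal.span S, ∀ d ∈ Ideal.span S, c * sg m s d = 0 := by
  intro c hc d hd
  induction hc using Submodule.span_induction with
  | zero => simp
  | add x y _ _ hx hy => rw [add_mul, hx, hy, add_zero]
  | smul r x _ hx => rw [smul_eq_mul, mul_assoc, hx, mul_zero]
  | mem p hp =>
    induction hd using Submodule.span_induction with
    | zero => simp
    | add x y _ _ hx hy => rw [map_add, mul_add, hx, hy, add_zero]
    | smul r x _ hx => rw [smul_eq_mul, map_mul, mul_left_comm, hx, mul_zero]
    | mem q hq => exact h p hp q hq

lemma KtoR_x (m s : ℕ) : KtoR m s (xK m s) = xR m s := by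
  simp only [KtoR, xK]; exact AdjoinRoot.lift_root _

lemma KtoR_alg (m s : ℕ) (r : Fq m) : KtoR m s (algebraMap _ _ r) =
    algebraMap (R3 m) (RR m s) (algebraMap _ _ r) := by
  simp only [KtoR]; exact AdjoinRoot.lift_of _

lemma mu_x (m s : ℕ) : muRK m s (xR m s) = xK m s := by
  simp only [muRK, xR]; exact AdjoinRoot.lift_root _

lemma mu_alg (m s : ℕ) (r : R3 m) : muRK m s (algebraMap _ _ r) =
    algebraMap _ _ (epsR3 m r) := by
  simp only [muRK]; exact AdjoinRoot.lift_of _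

lemma mu_u (m s : ℕ) : muRK m s (uR m s) = 0 := by
  rw [uR, mu_alg]
  have : epsR3 m (uu m) = 0 := by
    simp only [epsR3, uu]; exact AdjoinRoot.lift_root _
  rw [this, map_zero]

lemma decomp1 (m s : ℕ) (c : RR m s) : ∃ (c0 : KK m s) (ca : RR m s),
    c = KtoR m s c0 + uR m s * ca := by
  have key : (Ideal.Quotient.mk (Ideal.span {uR m s})).comp ((KtoR m s).comp (muRK m s)) =
      Ideal.Quotient.mk (Ideal.span {uR m s}) := by
    have hu : Ideal.Quotient.mk (Ideal.span {uR m s}) (uR m s) = 0 :=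
      Ideal.Quotient.eq_zero_iff_mem.2 (Ideal.subset_span rfl)
    apply AdjoinRoot.ringHom_ext
    · apply AdjoinRoot.ringHom_ext
      · ext r
        change Ideal.Quotient.mk _ (KtoR m s (muRK m s (algebraMap _ _ (AdjoinRoot.of _ r)))) =
          Ideal.Quotient.mk _ (algebraMap (R3 m) (RR m s) (AdjoinRoot.of _ r))
        rw [mu_alg]
        have : epsR3 m (AdjoinRoot.of _ r) = r := by
          simp only [epsR3]; exact AdjoinRoot.lift_of _
        rw [this, KtoR_alg]
        rfl
      · change Ideal.Quotient.mk _ (KtoR m s (muRK m s (uR m s))) = Ideal.Quotient.mk _ (uR m s)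
        rw [mu_u, hu, map_zero, map_zero]
    · change Ideal.Quotient.mk _ (KtoR m s (muRK m s (xR m s))) = Ideal.Quotient.mk _ (xR m s)
      rw [mu_x, KtoR_x]
  have h := (RingHom.congr_fun key c).symm
  have h2 := Ideal.Quotient.eq.1 h
  obtain ⟨ca, hca⟩ := Ideal.mem_span_singleton.1 h2
  refine ⟨muRK m s c, ca, ?_⟩
  rw [← hca]
  simp

lemma decomp (m s : ℕ) (c : RR m s) : ∃ (c0 c1 c2 : KK m s),
    c = KtoR m s c0 + uR m s * KtoR m s c1 + uR m s ^ 2 * KtoR m s c2 := by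
  obtain ⟨c0, ca, h0⟩ := decomp1 m s c
  obtain ⟨c1, cb, h1⟩ := decomp1 m s ca
  obtain ⟨c2, c3, h2⟩ := decomp1 m s cb
  refine ⟨c0, c1, c2, ?_⟩
  rw [h0, h1, h2]
  linear_combination c3 * uR_cube m s

/-- map to K[u]/u^3 -/
def phi0 (m s : ℕ) : R3 m →+* AdjoinRoot (X ^ 3 : (KK m s)[X]) :=
  AdjoinRoot.lift ((AdjoinRoot.of _).comp (algebraMap (Fq m) (KK m s))) (AdjoinRoot.root _) (by
    have h := AdjoinRoot.eval₂_root (X ^ 3 : (KK m s)[X])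
    simpa using h)

/-- map to K[u]/u^3 -/
def phi (m s : ℕ) : RR m s →+* AdjoinRoot (X ^ 3 : (KK m s)[X]) :=
  AdjoinRoot.lift (phi0 m s) (AdjoinRoot.of _ (xK m s)) (by
    simp only [gR, eval₂_add, eval₂_pow, eval₂_X, eval₂_one]
    rw [← map_pow, ← map_one (AdjoinRoot.of _), ← map_add, xK_pow_add_one, map_zero])

lemma u2_inj (m s : ℕ) (B : KK m s) (h : uR m s ^ 2 * KtoR m s B = 0) : B = 0 := by
  have hu : phi m s (uR m s) = AdjoinRoot.root _ := by
    have : phi m s (uR m s) = phi0 m s (uu m) := by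
      simp only [phi, uR]; exact AdjoinRoot.lift_of _
    rw [this]
    simp only [phi0, uu]; exact AdjoinRoot.lift_root _
  have hK : (phi m s).comp (KtoR m s) = AdjoinRoot.of _ := by
    apply AdjoinRoot.ringHom_ext
    · ext r
      change phi m s (KtoR m s (algebraMap _ _ r)) = AdjoinRoot.of _ (algebraMap _ _ r)
      rw [KtoR_alg]
      have : ∀ r, phi m s (algebraMap _ _ r) = phi0 m s r := by
        intro r
        simp only [phi]; exact AdjoinRoot.lift_of _
      rw [this]
      simp only [phi0]; exact AdjoinRoot.lift_of _
    · change phi m s (KtoR m s (xK m s)) = AdjoinRoot.of _ (xK m s)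
      rw [KtoR_x]
      simp only [phi, xR]; exact AdjoinRoot.lift_root _
  have h1 := congrArg (phi m s) h
  have h2 : phi m s (KtoR m s B) = AdjoinRoot.of _ B := RingHom.congr_fun hK B
  rw [map_mul, map_pow, hu, h2, map_zero] at h1
  have h3 : AdjoinRoot.mk (X ^ 3 : (KK m s)[X]) (X ^ 2 * C B) = 0 := by
    rw [map_mul, map_pow]; exact h1
  rw [AdjoinRoot.mk_eq_zero, X_pow_dvd_iff] at h3
  have := h3 2 (by norm_num)
  simpa [coeff_X_pow_mul'] using this

/-- evaluation at `x + 1` -/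
def psi (m s : ℕ) : (Fq m)[X] →+* KK m s := eval₂RingHom (algebraMap _ _) (xK m s + 1)

lemma psi_X (m s : ℕ) : psi m s X = xK m s + 1 := by simp [psi]
lemma psi_C (m s : ℕ) (r : Fq m) : psi m s (C r) = algebraMap _ _ r := by simp [psi]

lemma psi_eq (m s : ℕ) (q : (Fq m)[X]) : psi m s q = AdjoinRoot.mk (gK m s) (q.comp (X + 1)) := by
  have : psi m s = (AdjoinRoot.mk (gK m s)).comp (compRingHom (X + 1)) := by
    apply Polynomial.ringHom_ext
    · intro r
      rw [psi_C]; simp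
    · rw [psi_X]; simp [xK]
  rw [this]; rfl

lemma psi_surj (m s : ℕ) (z : KK m s) : ∃ q, psi m s q = z := by
  obtain ⟨p, rfl⟩ := AdjoinRoot.mk_surjective z
  refine ⟨p.comp (X - 1), ?_⟩
  rw [psi_eq, comp_assoc]; simp

lemma psi_zero_iff (m s : ℕ) (q : (Fq m)[X]) : psi m s q = 0 ↔ X ^ (2 ^ s) ∣ q := by
  have hg : gK m s = (X + 1) ^ (2 ^ s) := by
    rw [gK, add_pow_char_pow, one_pow]
  rw [psi_eq, AdjoinRoot.mk_eq_zero, hg]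
  constructor
  · intro ⟨r, hr⟩
    have := congrArg (fun p => p.comp (X - 1)) hr
    simp only [comp_assoc, mul_comp, pow_comp] at this
    simp at this
    exact ⟨_, this⟩
  · rintro ⟨r, rfl⟩
    simp

lemma y_ann (m s k : ℕ) (hk : k ≤ 2 ^ s) (z : KK m s) (h : z * (xK m s + 1) ^ k = 0) :
    ∃ w, z = (xK m s + 1) ^ (2 ^ s - k) * w := by
  obtain ⟨q, rfl⟩ := psi_surj m s z
  rw [← psi_X, ← map_pow, ← map_mul, psi_zero_iff] at h
  have e : (X : (Fq m)[X]) ^ (2 ^ s) = X ^ (2 ^ s - k) * X ^ k := by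
    rw [← pow_add, Nat.sub_add_cancel hk]
  rw [e] at h
  obtain ⟨w, rfl⟩ := (mul_dvd_mul_iff_right (pow_ne_zero k X_ne_zero)).1 h
  exact ⟨psi m s w, by simp [psi_X]⟩

lemma y_pow_zero (m s k : ℕ) : (xK m s + 1) ^ k = 0 ↔ 2 ^ s ≤ k := by
  rw [← psi_X, ← map_pow, psi_zero_iff]
  exact pow_dvd_pow_iff X_ne_zero not_isUnit_X

lemma yR_pow_zero (m s k : ℕ) (h : 2 ^ s ≤ k) : (xR m s + 1) ^ k = 0 := by
  have := congrArg (KtoR m s) ((y_pow_zero m s k).2 h)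
  simpa [KtoR_x] using this

lemma sg_K_h (m s a : ℕ) (h : ℕ → Fq m) (ha : 2 ^ s ≤ 2 * a) :
    xR m s ^ a * sg m s (KtoR m s (∑ j ∈ Finset.range (2 ^ s - a),
      algebraMap (Fq m) (KK m s) (h j) * (xK m s + 1) ^ j)) =
    KtoR m s (psi m s (∑ j ∈ Finset.range (2 ^ s - a),
      Polynomial.C (h j) * ((X + 1) ^ (a - j) * X ^ j))) := by
  rw [map_sum, map_sum, map_sum, map_sum, Finset.mul_sum]
  apply Finset.sum_congr rfl
  intro j hj
  rw [Finset.mem_range] at hj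
  have hx : psi m s (X + 1) = xK m s := by
    rw [map_add, psi_X, map_one]; linear_combination two_KK m s
  simp only [map_mul, map_pow, hx, psi_C, psi_X]
  have hy : KtoR m s (xK m s + 1) = xR m s + 1 := by rw [map_add, KtoR_x, map_one]
  rw [hy, sg_y, KtoR_alg, sg_alg, KtoR_x]
  have e : xR m s ^ a = xR m s ^ (a - j) * xR m s ^ j := by
    rw [← pow_add, Nat.sub_add_cancel (by omega)]
  have e1 : xR m s ^ j * xi m s ^ j = 1 := by rw [← mul_pow, xR_mul_xi, one_pow]
  rw [e, mul_pow]
  linear_combination (xR m s ^ (a - j) * algebraMap (R3 m) (RR m s) (algebraMap _ _ (h j)) *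
    (xR m s + 1) ^ j) * e1

lemma coeff_cond (m s a : ℕ) (h : ℕ → Fq m) (ha2 : a ≤ 2 ^ s) :
    X ^ (2 ^ s) ∣ X ^ a * ((∑ j ∈ Finset.range (2 ^ s - a), Polynomial.C (h j) * X ^ j) +
      ∑ j ∈ Finset.range (2 ^ s - a), Polynomial.C (h j) * ((X + 1) ^ (a - j) * X ^ j)) ↔
    ∀ ℓ < 2 ^ s - a,
          h ℓ = ∑ j ∈ Finset.range (ℓ + 1), h j * ((a - j).choose (ℓ - j) : Fq m) := by
  have e : (X : (Fq m)[X]) ^ (2 ^ s) = X ^ a * X ^ (2 ^ s - a) := by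
    rw [← pow_add, Nat.add_sub_cancel' ha2]
  rw [e, mul_dvd_mul_iff_left (pow_ne_zero a X_ne_zero), X_pow_dvd_iff]
  apply forall₂_congr
  intro l hl
  have h1 : (∑ j ∈ Finset.range (2 ^ s - a), Polynomial.C (h j) * X ^ j).coeff l = h l := by
    simp [coeff_X_pow, hl]
  have h2 : (∑ j ∈ Finset.range (2 ^ s - a),
      Polynomial.C (h j) * ((X + 1) ^ (a - j) * X ^ j)).coeff l =
      ∑ j ∈ Finset.range (l + 1), h j * ((a - j).choose (l - j) : Fq m) := by
    rw [finsetSum_coeff]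
    symm
    have hsub : Finset.range (l + 1) ⊆ Finset.range (2 ^ s - a) := by
      intro j hj; rw [Finset.mem_range] at *; omega
    rw [← Finset.sum_subset_zero_on_sdiff hsub]
    · intro j hj
      simp only [Finset.mem_sdiff, Finset.mem_range] at hj
      rw [coeff_C_mul, coeff_mul_X_pow', if_neg (by omega), mul_zero]
    · intro j hj
      rw [Finset.mem_range] at hj
      rw [coeff_C_mul, coeff_mul_X_pow', if_pos (by omega), coeff_X_add_one_pow]
  rw [coeff_add, h1, h2]
  constructor
  · intro h3
    linear_combination h3 - (∑ j ∈ Finset.range (l + 1),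
      h j * ((a - j).choose (l - j) : Fq m)) * two_Fq m
  · intro h3
    rw [← h3]; linear_combination h l * two_Fq m

lemma g1_cond (m s a : ℕ) (h : ℕ → Fq m) (ha : 2 ^ s ≤ 2 * a) (ha2 : a ≤ 2 ^ s) (hK : KK m s)
    (hKdef : hK = ∑ j ∈ Finset.range (2 ^ s - a),
      algebraMap (Fq m) (KK m s) (h j) * (xK m s + 1) ^ j) :
    ((xR m s + 1) ^ a + uR m s ^ 2 * KtoR m s hK) *
      sg m s ((xR m s + 1) ^ a + uR m s ^ 2 * KtoR m s hK) = 0 ↔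
    ∀ ℓ < 2 ^ s - a,
          h ℓ = ∑ j ∈ Finset.range (ℓ + 1), h j * ((a - j).choose (ℓ - j) : Fq m) := by
  rw [← coeff_cond m s a h ha2, ← psi_zero_iff]
  set P : (Fq m)[X] := ∑ j ∈ Finset.range (2 ^ s - a), Polynomial.C (h j) * X ^ j with hP
  set Q : (Fq m)[X] := ∑ j ∈ Finset.range (2 ^ s - a),
      Polynomial.C (h j) * ((X + 1) ^ (a - j) * X ^ j) with hQ
  have hKP : hK = psi m s P := by
    rw [hKdef, hP, map_sum]
    simp [psi_C, psi_X]
  have hKQ : xR m s ^ a * sg m s (KtoR m s hK) = KtoR m s (psi m s Q) := by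
    rw [hKdef, hQ]; exact sg_K_h m s a h ha
  have hy : KtoR m s (xK m s + 1) = xR m s + 1 := by rw [map_add, KtoR_x, map_one]
  have e1 : xR m s ^ a * xi m s ^ a = 1 := by rw [← mul_pow, xR_mul_xi, one_pow]
  have hy2 := yR_pow_zero m s (2 * a) ha
  have main : xR m s ^ a * (((xR m s + 1) ^ a + uR m s ^ 2 * KtoR m s hK) *
      sg m s ((xR m s + 1) ^ a + uR m s ^ 2 * KtoR m s hK)) =
      uR m s ^ 2 * KtoR m s (psi m s (X ^ a * (P + Q))) := by
    rw [map_mul, map_mul (KtoR m s), map_pow, map_pow, psi_X, hy, map_add (psi m s), map_add (KtoR m s),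
      ← hKP, ← hKQ, map_add, map_pow, sg_y, map_mul, map_pow, sg_u, mul_pow]
    rw [mul_comm 2 a, pow_mul] at hy2
    linear_combination (xR m s ^ a * xi m s ^ a) * hy2 +
      (xR m s + 1) ^ a * uR m s ^ 2 * KtoR m s hK * e1 +
      uR m s * KtoR m s hK * xR m s ^ a * sg m s (KtoR m s hK) * uR_cube m s
  constructor
  · intro h0
    rw [h0, mul_zero] at main
    exact u2_inj m s _ main.symm
  · intro h0
    rw [h0, map_zero, mul_zero] at main
    have := congrArg (fun z => xi m s ^ a * z) main
    simp only [mul_zero] at this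
    linear_combination this - (((xR m s + 1) ^ a + uR m s ^ 2 * KtoR m s hK) *
      sg m s ((xR m s + 1) ^ a + uR m s ^ 2 * KtoR m s hK)) * e1

/-- Self-duality criterion for the codes of Theorem 4 (`h₁ = 0` case). -/
theorem stmt8 (m s : ℕ) (hm : 0 < m) (hs : 0 < s)
    (a : ℕ) (ha1 : 1 ≤ a) (ha2 : a ≤ 2 ^ s - 1)
    (h : ℕ → Fq m) (hK : KK m s)
    (hKdef : hK = ∑ j ∈ Finset.range (2 ^ s - a),
      algebraMap (Fq m) (KK m s) (h j) * (xK m s + 1) ^ j)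
    (h₃ : KK m s) (hh₃ : h₃ = 0 ∨ IsUnit h₃)
    (t₃ : ℕ) (ht₃ : t₃ < 2 ^ s - a)
    (C : Ideal (RR m s))
    (hC : C = Ideal.span
      {(xR m s + 1) ^ a + uR m s ^ 2 * KtoR m s hK,
       uR m s * (xR m s + 1) ^ (2 ^ (s - 1)) + uR m s ^ 2 * (xR m s + 1) ^ t₃ * KtoR m s h₃,
       uR m s ^ 2 * (xR m s + 1) ^ (2 ^ s - a)})
    (hT0 : TorSet m s (C : Set (RR m s)) 0 =
      ((Ideal.span {(xK m s + 1) ^ a} : Ideal (KK m s)) : Set (KK m s)))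
    (hT1 : TorSet m s (C : Set (RR m s)) 1 =
      ((Ideal.span {(xK m s + 1) ^ (2 ^ (s - 1))} : Ideal (KK m s)) : Set (KK m s)))
    (hT2 : TorSet m s (C : Set (RR m s)) 2 =
      ((Ideal.span {(xK m s + 1) ^ (2 ^ s - a)} : Ideal (KK m s)) : Set (KK m s))) :
    IsSelfDual m s C ↔
      (2 ^ (s - 1) ≤ a ∧ a ≤ 2 ^ s - 1 ∧ h₃ = 0 ∧
        ∀ ℓ < 2 ^ s - a,
          h ℓ = ∑ j ∈ Finset.range (ℓ + 1), h j * ((a - j).choose (ℓ - j) : Fq m)) := by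
  have hn : 2 ^ s = 2 * 2 ^ (s - 1) := by
    rw [← pow_succ', Nat.sub_add_cancel hs]
  have hpos : 0 < 2 ^ (s - 1) := by positivity
  have hy : KtoR m s (xK m s + 1) = xR m s + 1 := by rw [map_add, KtoR_x, map_one]
  have hxi := xR_mul_xi m s
  have hu3 := uR_cube m s
  set g1 := (xR m s + 1) ^ a + uR m s ^ 2 * KtoR m s hK with hg1
  set g2 := uR m s * (xR m s + 1) ^ (2 ^ (s - 1)) +
    uR m s ^ 2 * (xR m s + 1) ^ t₃ * KtoR m s h₃ with hg2
  set g3 := uR m s ^ 2 * (xR m s + 1) ^ (2 ^ s - a) with hg3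
  have m1 : g1 ∈ C := by rw [hC]; exact Ideal.subset_span (by simp)
  have m2 : g2 ∈ C := by rw [hC]; exact Ideal.subset_span (by simp)
  have m3 : g3 ∈ C := by rw [hC]; exact Ideal.subset_span (by simp)
  have s1 : sg m s g1 = xi m s ^ a * (xR m s + 1) ^ a +
      uR m s ^ 2 * sg m s (KtoR m s hK) := by
    rw [hg1, map_add, map_pow, sg_y, map_mul, map_pow, sg_u, mul_pow]
  have s2 : sg m s g2 = uR m s * (xi m s ^ (2 ^ (s - 1)) * (xR m s + 1) ^ (2 ^ (s - 1))) +
      uR m s ^ 2 * (xi m s ^ t₃ * (xR m s + 1) ^ t₃) * sg m s (KtoR m s h₃) := by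
    rw [hg2, map_add, map_mul, map_mul, map_mul, map_pow, map_pow, map_pow, sg_y, sg_u,
      mul_pow, mul_pow]
  have s3 : sg m s g3 = uR m s ^ 2 * (xi m s ^ (2 ^ s - a) * (xR m s + 1) ^ (2 ^ s - a)) := by
    rw [hg3, map_mul, map_pow, map_pow, sg_y, sg_u, mul_pow]
  have xik : ∀ k, xR m s ^ k * xi m s ^ k = 1 := fun k => by rw [← mul_pow, hxi, one_pow]
  constructor
  · intro hsd
    have orth : ∀ c ∈ C, ∀ d ∈ C, c * sg m s d = 0 := by
      intro c hc
      have : c ∈ (C : Set (RR m s)) := hc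
      rw [hsd] at this
      exact (mem_dual m s C c).1 this
    have o11 := orth g1 m1 g1 m1
    have o12 := orth g1 m1 g2 m2
    have hna : 2 ^ s ≤ 2 * a := by
      rw [← y_pow_zero m s]
      have h1 := o11
      rw [s1, hg1] at h1
      have h2 := congrArg (fun z => muRK m s (xR m s ^ a * z)) h1
      simp only [map_mul, map_add, map_pow, mu_u, mu_x, map_one, mul_zero, map_zero] at h2
      have h3 := congrArg (muRK m s) (xik a)
      simp only [map_mul, map_pow, mu_x, map_one] at h3
      rw [mul_comm 2 a, pow_mul]
      simp at h2
      linear_combination h2 - ((xK m s + 1) ^ a) ^ 2 * h3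
    refine ⟨by omega, ha2, ?_, (g1_cond m s a h hna (by omega) hK hKdef).1 o11⟩
    rcases hh₃ with h0 | hun
    · exact h0
    exfalso
    have hz := yR_pow_zero m s (a + 2 ^ (s - 1)) (by omega)
    rw [s2, hg1] at o12
    obtain ⟨v, hv⟩ := hun.exists_right_inv
    have hv2 : sg m s (KtoR m s h₃) * sg m s (KtoR m s v) = 1 := by
      rw [← map_mul, ← map_mul, hv, map_one, map_one]
    have hf : uR m s ^ 2 * KtoR m s ((xK m s + 1) ^ (a + t₃)) = 0 := by
      rw [map_pow, hy]
      have hx := xik t₃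
      rw [pow_add] at hz ⊢
      generalize sg m s (KtoR m s h₃) = H at *
      generalize sg m s (KtoR m s v) = V at *
      generalize sg m s (KtoR m s hK) = W at *
      generalize KtoR m s hK = Z at *
      generalize xR m s + 1 = y at *
      generalize uR m s = u at *
      have e1 : u ^ 2 * (xi m s ^ t₃ * (y ^ a * y ^ t₃)) * H = 0 := by
        linear_combination o12 - u * xi m s ^ (2 ^ (s - 1)) * hz -
          (Z * (xi m s ^ (2 ^ (s - 1)) * y ^ (2 ^ (s - 1))) +
            u * Z * (xi m s ^ t₃ * y ^ t₃) * H) * hu3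
      linear_combination (xR m s ^ t₃ * V) * e1 - u ^ 2 * (y ^ a * y ^ t₃) * H * V * hx -
        u ^ 2 * (y ^ a * y ^ t₃) * hv2
    have := u2_inj m s _ hf
    rw [y_pow_zero] at this
    omega
  · rintro ⟨hna, -, h30, hcond⟩
    subst h30
    rw [map_zero, mul_zero, add_zero] at hg2
    rw [map_zero, map_zero, mul_zero, add_zero] at s2
    have o11 := (g1_cond m s a h (by omega) (by omega) hK hKdef).2 hcond
    rw [← hg1] at o11
    have za := yR_pow_zero m s (a + 2 ^ (s - 1)) (by omega)
    have zb := yR_pow_zero m s (2 ^ (s - 1) + 2 ^ (s - 1)) (by omega)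
    have zc := yR_pow_zero m s (a + (2 ^ s - a)) (by omega)
    rw [pow_add] at za zb zc
    have orth : ∀ c ∈ C, ∀ d ∈ C, c * sg m s d = 0 := by
      rw [hC]
      apply span_orth
      intro p hp q hq
      simp only [Set.mem_insert_iff, Set.mem_singleton_iff] at hp hq
      rcases hp with rfl | rfl | rfl <;> rcases hq with rfl | rfl | rfl
      · exact o11
      · rw [s2, hg1]
        linear_combination uR m s * xi m s ^ (2 ^ (s - 1)) * za +
          KtoR m s hK * xi m s ^ (2 ^ (s - 1)) * (xR m s + 1) ^ (2 ^ (s - 1)) * hu3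
      · rw [s3, hg1]
        linear_combination uR m s ^ 2 * xi m s ^ (2 ^ s - a) * zc +
          uR m s * KtoR m s hK * xi m s ^ (2 ^ s - a) * (xR m s + 1) ^ (2 ^ s - a) * hu3
      · rw [s1, hg2]
        linear_combination uR m s * xi m s ^ a * za +
          sg m s (KtoR m s hK) * (xR m s + 1) ^ (2 ^ (s - 1)) * hu3
      · rw [s2, hg2]
        linear_combination uR m s ^ 2 * xi m s ^ (2 ^ (s - 1)) * zb
      · rw [s3, hg2]
        linear_combination (xR m s + 1) ^ (2 ^ (s - 1)) * xi m s ^ (2 ^ s - a) *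
          (xR m s + 1) ^ (2 ^ s - a) * hu3
      · rw [s1, hg3]
        linear_combination uR m s ^ 2 * xi m s ^ a * zc +
          uR m s * sg m s (KtoR m s hK) * (xR m s + 1) ^ (2 ^ s - a) * hu3
      · rw [s2, hg3]
        linear_combination (xR m s + 1) ^ (2 ^ (s - 1)) * xi m s ^ (2 ^ (s - 1)) *
          (xR m s + 1) ^ (2 ^ s - a) * hu3
      · rw [s3, hg3]
        linear_combination uR m s * (xR m s + 1) ^ (2 ^ s - a) * xi m s ^ (2 ^ s - a) *
          (xR m s + 1) ^ (2 ^ s - a) * hu3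
    apply Set.Subset.antisymm
    · intro c hc
      exact (mem_dual m s C c).2 (orth c hc)
    · intro c hc
      rw [mem_dual] at hc
      change c ∈ C
      obtain ⟨c0, c1, c2, hcd⟩ := decomp m s c
      have b0 : c0 * (xK m s + 1) ^ (2 ^ s - a) = 0 := by
        apply u2_inj
        have h1 := hc g3 m3
        rw [s3, hcd] at h1
        rw [map_mul, map_pow, hy]
        linear_combination xR m s ^ (2 ^ s - a) * h1 -
          uR m s ^ 2 * KtoR m s c0 * (xR m s + 1) ^ (2 ^ s - a) * xik (2 ^ s - a) -
          (KtoR m s c1 + uR m s * KtoR m s c2) * xR m s ^ (2 ^ s - a) *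
            xi m s ^ (2 ^ s - a) * (xR m s + 1) ^ (2 ^ s - a) * hu3
      obtain ⟨d0, hd0⟩ := y_ann m s _ (by omega) c0 b0
      rw [show 2 ^ s - (2 ^ s - a) = a by omega] at hd0
      have hk0 : KtoR m s c0 = (xR m s + 1) ^ a * KtoR m s d0 := by
        rw [hd0, map_mul, map_pow, hy]
      have b1 : c1 * (xK m s + 1) ^ (2 ^ (s - 1)) = 0 := by
        apply u2_inj
        have h1 := hc g2 m2
        rw [s2, hcd, hk0] at h1
        rw [map_mul, map_pow, hy]
        linear_combination xR m s ^ (2 ^ (s - 1)) * h1 -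
          uR m s ^ 2 * KtoR m s c1 * (xR m s + 1) ^ (2 ^ (s - 1)) * xik (2 ^ (s - 1)) -
          KtoR m s c2 * xR m s ^ (2 ^ (s - 1)) *
            xi m s ^ (2 ^ (s - 1)) * (xR m s + 1) ^ (2 ^ (s - 1)) * hu3 -
          uR m s * KtoR m s d0 * xR m s ^ (2 ^ (s - 1)) * xi m s ^ (2 ^ (s - 1)) * za
      obtain ⟨d1, hd1⟩ := y_ann m s _ (by omega) c1 b1
      rw [show 2 ^ s - 2 ^ (s - 1) = 2 ^ (s - 1) by omega] at hd1
      have hk1 : KtoR m s c1 = (xR m s + 1) ^ (2 ^ (s - 1)) * KtoR m s d1 := by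
        rw [hd1, map_mul, map_pow, hy]
      have hce : c = KtoR m s d0 * g1 + KtoR m s d1 * g2 +
          uR m s ^ 2 * KtoR m s (c2 - hK * d0) := by
        rw [hcd, hk0, hk1, hg1, hg2, map_sub, map_mul]; ring
      have b2 : (c2 - hK * d0) * (xK m s + 1) ^ a = 0 := by
        apply u2_inj
        have h1 := hc g1 m1
        have h2 := orth g2 m2 g1 m1
        rw [hce] at h1
        have h3 : uR m s ^ 2 * KtoR m s (c2 - hK * d0) * sg m s g1 = 0 := by
          linear_combination h1 - KtoR m s d0 * o11 - KtoR m s d1 * h2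
        rw [s1] at h3
        rw [map_mul, map_pow, hy]
        generalize KtoR m s (c2 - hK * d0) = E at *
        linear_combination xR m s ^ a * h3 - uR m s ^ 2 * E * (xR m s + 1) ^ a * xik a -
          uR m s * E * xR m s ^ a * sg m s (KtoR m s hK) * hu3
      obtain ⟨d2, hd2⟩ := y_ann m s _ (by omega) _ b2
      have hk2 : uR m s ^ 2 * KtoR m s (c2 - hK * d0) = KtoR m s d2 * g3 := by
        rw [hd2, map_mul, map_pow, hy, hg3]; ring
      rw [hce, hk2]
      exact C.add_mem (C.add_mem (C.mul_mem_left _ m1) (C.mul_mem_left _ m2)) (C.mul_mem_left _ m3)
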